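/- arXiv:2111.07399 — 4 statements merged into one kernel-verified Lean document; each statement's English description precedes it below -/
import Mathlib

section
/- Let G be a locally finite graph on ℕ. The product (v ⋆ w)_k = ∑_i v_i w_i a_{ki} maps every pair v, w ∈ ℓ²(ℕ) to a well-defined element of ℓ²(ℕ) with every left multiplication L_v : w ↦ v ⋆ w a bounded linear operator on ℓ²(ℕ), if and only if G has uniformly bounded degree. -/
/-!
Let `c i` be the `i`-th column of the adjacency matrix, so that `‖c i‖ ^ 2 = deg i` because the
entries are `0` or `1`, and formally `v ⋆ w = ∑ i, (v i * w i) • c i`.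

If the columns are uniformly bounded, then Hölder's inequality puts `(v i * w i) • c i` in `ℓ¹`, so
the series converges absolutely and is bounded in `w`.

Conversely, a bounded `L_v` satisfies `L_v e_i = v i • c i`, so `‖v i • c i‖ ≤ ‖L_v‖` for all `i`.
The operators `v ↦ v i • c i` are therefore pointwise bounded, hence uniformly bounded by the
Banach–Steinhaus theorem, and their values at `e_i` are the columns.
-/

noncomputable section
open scoped ENNReal

/-- The real Hilbert space ℓ²(ℕ) of square-summable sequences. -/
abbrev l2 : Type := lp (fun _ : ℕ => ℝ) 2

/-- The degree of vertex `i` in the graph with adjacency coefficients `a`. -/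
def deg (a : ℕ → ℕ → ℝ) (i : ℕ) : ℝ := ∑' k, a k i

open scoped NNReal lp

section UniformBoundedness

lemma norm_apply_single_le {ι 𝕜 F : Type*} {E : ι → Type*} [DecidableEq ι]
    [NontriviallyNormedField 𝕜] [∀ i, NormedAddCommGroup (E i)] [∀ i, NormedSpace 𝕜 (E i)]
    [NormedAddCommGroup F] [NormedSpace 𝕜 F] {p : ℝ≥0∞} [Fact (1 ≤ p)]
    (T : lp E p →L[𝕜] F) (i : ι) (x : E i) : ‖T (lp.single p i x)‖ ≤ ‖T‖ * ‖x‖ :=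
  (T.le_opNorm _).trans_eq <| by rw [lp.norm_single (zero_lt_one.trans_le Fact.out)]

lemma exists_norm_le_of_forall_exists_norm_smul_le {ι 𝕜 E : Type*} [NontriviallyNormedField 𝕜]
    [CompleteSpace 𝕜] [NormedAddCommGroup E] [NormedSpace 𝕜 E] {p : ℝ≥0∞} [Fact (1 ≤ p)]
    {c : ι → E} (h : ∀ v : ℓ^p(ι, 𝕜), ∃ C, ∀ i, ‖v i • c i‖ ≤ C) : ∃ C, ∀ i, ‖c i‖ ≤ C := by
  classical
  let φ (i : ι) : ℓ^p(ι, 𝕜) →L[𝕜] E := (lp.evalCLM 𝕜 (fun _ ↦ 𝕜) p i).smulRight (c i)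
  obtain ⟨C, hC⟩ : ∃ C, ∀ i, ‖φ i‖ ≤ C := banach_steinhaus h
  refine ⟨C, fun i ↦ ?_⟩
  calc
    ‖c i‖ = ‖φ i (lp.single p i 1)‖ := by simp [φ, lp.evalCLM]
    _ ≤ ‖φ i‖ := by simpa using norm_apply_single_le (φ i) i 1
    _ ≤ C := hC i

end UniformBoundedness

section MulSMul

variable {𝕜 E : Type*} [NontriviallyNormedField 𝕜] [NormedAddCommGroup E] [NormedSpace 𝕜 E]

/-- The bilinear map `(s, t) ↦ (s * t) • x`, which multiplies the coordinates of two vectors along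
a column `x` of structure coefficients. -/
def mulSMulCLM (x : E) : 𝕜 →L[𝕜] 𝕜 →L[𝕜] E :=
  (ContinuousLinearMap.smulRightL 𝕜 𝕜 E).flip x ∘L ContinuousLinearMap.mul 𝕜 𝕜

lemma mulSMulCLM_apply (x : E) (s t : 𝕜) : mulSMulCLM x s t = (s * t) • x := rfl

lemma norm_mulSMulCLM_le (x : E) : ‖mulSMulCLM (𝕜 := 𝕜) x‖ ≤ ‖x‖ :=
  ContinuousLinearMap.opNorm_le_bound₂ _ (norm_nonneg x) fun s t ↦ by
    rw [mulSMulCLM_apply, norm_smul, norm_mul, mul_comm, mul_assoc]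

end MulSMul

section EvolutionMul

variable {ι 𝕜 E : Type*} [RCLike 𝕜] [NormedAddCommGroup E] [NormedSpace 𝕜 E] [CompleteSpace E]
  {p q : ℝ≥0∞} [Fact (1 ≤ p)] [Fact (1 ≤ q)] [p.HolderConjugate q] {c : ι → E} {K : ℝ≥0}

/-- The evolution algebra product `(v, w) ↦ ∑' i, (v i * w i) • c i` determined by a uniformly
bounded family of columns `c`. The columns may lie in any Banach space, and the two factors in
conjugate `ℓ^p` spaces. -/
def evolutionMul (hc : ∀ i, ‖c i‖ ≤ K) : ℓ^p(ι, 𝕜) →L[𝕜] ℓ^q(ι, 𝕜) →L[𝕜] E :=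
  lp.dualPairing p q (fun i ↦ mulSMulCLM (c i)) fun i ↦ (norm_mulSMulCLM_le (c i)).trans (hc i)

lemma hasSum_evolutionMul (hc : ∀ i, ‖c i‖ ≤ K) (v : ℓ^p(ι, 𝕜)) (w : ℓ^q(ι, 𝕜)) :
    HasSum (fun i ↦ (v i * w i) • c i) (evolutionMul hc v w) := by
  have hmem : Memℓp (fun i ↦ mulSMulCLM (c i) (v i) (w i)) 1 :=
    (lp.memℓp v).holder 1 (lp.memℓp w) _ fun i ↦ (norm_mulSMulCLM_le (c i)).trans (hc i)
  rw [evolutionMul, lp.dualPairing_apply]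
  exact hmem.summable_of_one.hasSum

end EvolutionMul

section IsLeftMul

variable {ι κ 𝕜 : Type*} {p q r : ℝ≥0∞}

/-- `L` is the left multiplication by `v` in the evolution algebra with structure coefficients `a`.
The convergence of the coordinate series is part of the notion, since `∑'` takes the value `0` on
divergent series. -/
def IsLeftMul [NormedField 𝕜] (a : κ → ι → 𝕜) (v : ι → 𝕜) (L : ℓ^q(ι, 𝕜) → ℓ^r(κ, 𝕜)) : Prop :=
  ∀ w k, (Summable fun i ↦ v i * w i * a k i) ∧ L w k = ∑' i, v i * w i * a k i

lemma IsLeftMul.apply_single [NormedField 𝕜] [DecidableEq ι] {c : ι → ℓ^r(κ, 𝕜)} {v : ι → 𝕜}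
    {L : ℓ^q(ι, 𝕜) → ℓ^r(κ, 𝕜)} (hL : IsLeftMul (fun k i ↦ c i k) v L) (i : ι) :
    L (lp.single q i 1) = v i • c i := by
  ext k
  rw [(hL _ k).2, tsum_eq_single i fun j hj ↦ by simp [hj]]
  simp

lemma IsLeftMul.norm_smul_le [NontriviallyNormedField 𝕜] [Fact (1 ≤ q)] [Fact (1 ≤ r)]
    {c : ι → ℓ^r(κ, 𝕜)} {v : ι → 𝕜} {L : ℓ^q(ι, 𝕜) →L[𝕜] ℓ^r(κ, 𝕜)}
    (hL : IsLeftMul (fun k i ↦ c i k) v L) (i : ι) : ‖v i • c i‖ ≤ ‖L‖ := by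
  classical
  simpa [hL.apply_single] using norm_apply_single_le L i 1

variable [RCLike 𝕜] [Fact (1 ≤ p)] [Fact (1 ≤ q)] [p.HolderConjugate q] [Fact (1 ≤ r)]
  {c : ι → ℓ^r(κ, 𝕜)}

lemma isLeftMul_evolutionMul {K : ℝ≥0} (hc : ∀ i, ‖c i‖ ≤ K) (v : ℓ^p(ι, 𝕜)) :
    IsLeftMul (fun k i ↦ c i k) v (evolutionMul (q := q) hc v) := fun w k ↦ by
  have hsum : HasSum (fun i ↦ v i * w i * c i k) (evolutionMul hc v w k) := by
    simpa using! (hasSum_evolutionMul hc v w).mapL (lp.evalCLM 𝕜 (fun _ ↦ 𝕜) r k)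
  exact ⟨hsum.summable, hsum.tsum_eq.symm⟩

theorem forall_exists_isLeftMul_iff_exists_norm_le :
    (∀ v : ℓ^p(ι, 𝕜), ∃ L : ℓ^q(ι, 𝕜) →L[𝕜] ℓ^r(κ, 𝕜), IsLeftMul (fun k i ↦ c i k) v L) ↔
      ∃ K, ∀ i, ‖c i‖ ≤ K := by
  constructor
  · intro h
    refine exists_norm_le_of_forall_exists_norm_smul_le (𝕜 := 𝕜) (p := p) fun v ↦ ?_
    obtain ⟨L, hL⟩ := h v
    exact ⟨‖L‖, hL.norm_smul_le⟩
  · rintro ⟨K, hK⟩ v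
    have hc (i : ι) : ‖c i‖ ≤ K.toNNReal := (hK i).trans K.le_coe_toNNReal
    exact ⟨evolutionMul hc v, isLeftMul_evolutionMul hc v⟩

end IsLeftMul

section ZeroOne

variable {κ : Type*} {p : ℝ≥0∞}

lemma memℓp_of_summable_norm {E : κ → Type*} [∀ k, NormedAddCommGroup (E k)] {f : ∀ k, E k}
    (hp : 1 ≤ p) (hf : Summable fun k ↦ ‖f k‖) : Memℓp f p :=
  Memℓp.of_exponent_ge (memℓp_gen (by simpa using hf)) hp

lemma norm_rpow_eq_tsum_of_forall_eq_zero_or_one (hp : 0 < p.toReal) {f : ℓ^p(κ, ℝ)}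
    (hf : ∀ k, f k = 0 ∨ f k = 1) : ‖f‖ ^ p.toReal = ∑' k, f k := by
  rw [lp.norm_rpow_eq_tsum hp]
  refine tsum_congr fun k ↦ ?_
  rcases hf k with h | h <;> simp [h, hp.ne']

end ZeroOne

theorem evolution_algebra_welldefined_iff_unif_bounded_degree_general {ι κ : Type*}
    {p q r : ℝ≥0∞} [Fact (1 ≤ p)] [Fact (1 ≤ q)] [p.HolderConjugate q] [Fact (1 ≤ r)]
    (hr : r ≠ ∞) (a : κ → ι → ℝ) (hval : ∀ k i, a k i = 0 ∨ a k i = 1)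
    (hlf : ∀ i, Summable fun k ↦ a k i) :
    (∀ v : ℓ^p(ι, ℝ), ∃ L : ℓ^q(ι, ℝ) →L[ℝ] ℓ^r(κ, ℝ), IsLeftMul a v L) ↔
      ∃ M > 0, ∀ i, ∑' k, a k i ≤ M := by
  have hr_one : 1 ≤ r := Fact.out
  have hr_pos : 0 < r.toReal := ENNReal.toReal_pos (zero_lt_one.trans_le hr_one).ne' hr
  let c (i : ι) : ℓ^r(κ, ℝ) := ⟨fun k ↦ a k i, memℓp_of_summable_norm hr_one (hlf i).norm⟩
  have hdeg (i : ι) : ‖c i‖ ^ r.toReal = ∑' k, a k i :=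
    norm_rpow_eq_tsum_of_forall_eq_zero_or_one hr_pos (hval · i)
  refine (forall_exists_isLeftMul_iff_exists_norm_le (c := c)).trans ⟨?_, ?_⟩
  · rintro ⟨K, hK⟩
    refine ⟨max (K ^ r.toReal) 1, by positivity, fun i ↦ ?_⟩
    rw [← hdeg i]
    exact le_max_of_le_left (Real.rpow_le_rpow (norm_nonneg _) (hK i) hr_pos.le)
  · rintro ⟨M, hM_pos, hM⟩
    refine ⟨M ^ r.toReal⁻¹, fun i ↦ ?_⟩
    rw [Real.le_rpow_inv_iff_of_pos (norm_nonneg _) hM_pos.le hr_pos, hdeg i]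
    exact hM i

/-- for a locally finite simple graph on ℕ, the evolution-algebra product
`(v ⋆ w)_k = ∑_i v_i w_i a_{ki}` maps every pair `v, w ∈ ℓ²` to a well-defined element of
`ℓ²`, with every left multiplication `L_v` a bounded linear operator on `ℓ²`, if and only if
the graph has uniformly bounded degree. -/
theorem evolution_algebra_welldefined_iff_unif_bounded_degree
    (a : ℕ → ℕ → ℝ)
    (hval : ∀ k i, a k i = 0 ∨ a k i = 1)
    (hsym : ∀ k i, a k i = a i k)
    (hloop : ∀ i, a i i = 0)
    (hlf : ∀ i, Summable fun k => a k i) :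
    ((∀ v : l2, ∃ L : l2 →L[ℝ] l2, ∀ (w : l2) (k : ℕ),
        (Summable fun i => v i * w i * a k i) ∧ L w k = ∑' i, v i * w i * a k i) ↔
      ∃ M > 0, ∀ i, deg a i ≤ M) :=
  evolution_algebra_welldefined_iff_unif_bounded_degree_general ENNReal.ofNat_ne_top a hval hlf
end
end

section
/- Let G be a connected graph on ℕ with uniformly bounded degree which is non-singular, i.e. the bounded adjacency operator A on ℓ²(ℕ), (A v)_k = ∑_i a_{ki} v_i, has trivial kernel. If there exists an isomorphism of Hilbert evolution algebras from A_RW(G) to A(G) (a continuous linear bijection f with continuous inverse satisfying f(v ∘ w) = f(v) ⋆ f(w) for all v, w), then G is a regular graph or a biregular graph. -/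
/-!
Non-singularity turns the vanishing of `f δ_i ⋆ f δ_j = f (δ_i ∘ δ_j)` for `i ≠ j` into disjointness
of the supports of `f δ_i` and `f δ_j`. A continuous linear map with this property has values in the
sequences whose coordinates over the support of `f δ_i` are proportional to those of `f δ_i`, so
density of the range forces that support to be a single vertex as soon as `f δ_i ≠ 0`.
If `f δ_i = 0`, then squaring `δ_i` shows that the `f δ_k` with `k ~ i` sum to zero, so each of them
vanishes by disjointness, and connectedness gives `f = 0`. Thus `f δ_i = c_i δ_{π i}`, `c_i ≠ 0`.
Comparing coordinates `π k` in `f (δ_i ∘ δ_i) = f δ_i ⋆ f δ_i` for an edge `k ~ i` gives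
`c_k = deg(i) c_i²`. Hence all neighbours `k` of `i` share the same `c_k`, and from
`c_i = deg(k) c_k²` also the same degree. In a connected graph the degrees then alternate between
two, possibly equal, values.
-/

noncomputable section
open scoped ENNReal

/-- `a` is the adjacency function of a simple graph (0/1-valued, symmetric, no loops). -/
def SimpleAdj (a : ℕ → ℕ → ℝ) : Prop :=
  (∀ k i, a k i = 0 ∨ a k i = 1) ∧ (∀ k i, a k i = a i k) ∧ (∀ i, a i i = 0)

/-- The graph is connected: any two vertices are joined by a finite path of edges. -/
def Connected (a : ℕ → ℕ → ℝ) : Prop :=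
  ∀ i j : ℕ, Relation.ReflTransGen (fun x y => a x y = 1) i j

/-- The graph is locally finite: every degree series converges. -/
def GraphLocallyFinite (a : ℕ → ℕ → ℝ) : Prop := ∀ i, Summable fun k => a k i

/-- The graph has uniformly bounded degree. -/
def UnifBoundedDegree (a : ℕ → ℕ → ℝ) : Prop := ∃ M > 0, ∀ i, deg a i ≤ M

/-- The graph is regular: all degrees are equal. -/
def GraphRegular (a : ℕ → ℕ → ℝ) : Prop := ∃ d : ℝ, ∀ i, deg a i = d

/-- The graph is biregular: the vertex set splits as `V₁ ⊔ V₂` with every edge joining `V₁`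
to `V₂` and constant degrees `d₁` on `V₁` and `d₂` on `V₂`. -/
def GraphBiregular (a : ℕ → ℕ → ℝ) : Prop :=
  ∃ (V₁ : Set ℕ) (d₁ d₂ : ℝ),
    (∀ i ∈ V₁, deg a i = d₁) ∧ (∀ i ∉ V₁, deg a i = d₂) ∧
    ∀ i k, a k i = 1 → ((i ∈ V₁ ∧ k ∉ V₁) ∨ (i ∉ V₁ ∧ k ∈ V₁))

/-- `p` is the product `v ⋆ w` in the Hilbert evolution algebra `A(G)`:
`p_k = ∑_i v_i w_i a_{ki}` with all series convergent. -/
def IsStarProd (a : ℕ → ℕ → ℝ) (v w p : l2) : Prop :=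
  (∀ k, Summable fun i => v i * w i * a k i) ∧
  ∀ k, p k = ∑' i, v i * w i * a k i

/-- `p` is the product `v ∘ w` in the Hilbert evolution algebra `A_RW(G)`:
`p_k = ∑_i v_i w_i a_{ki}/deg(i)` with all series convergent. -/
def IsRWProd (a : ℕ → ℕ → ℝ) (v w p : l2) : Prop :=
  (∀ k, Summable fun i => v i * w i * (a k i / deg a i)) ∧
  ∀ k, p k = ∑' i, v i * w i * (a k i / deg a i)

/-- The graph is non-singular: the adjacency operator `(A v)_k = ∑_i a_{ki} v_i` on ℓ²(ℕ)
has trivial kernel. -/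
def NonSingular (a : ℕ → ℕ → ℝ) : Prop :=
  ∀ v : l2, (∀ k, ∑' i, a k i * v i = 0) → v = 0

/-- The standard orthonormal basis vector `δ_i` of ℓ²(ℕ). -/
def delta (i : ℕ) : l2 := lp.single 2 i (1 : ℝ)

open Function

section DisjointColumns

variable {ι κ 𝕜 : Type*} [DecidableEq ι] [NormedField 𝕜] {p q : ℝ≥0∞} [Fact (1 ≤ p)] [Fact (1 ≤ q)]
  {f : lp (fun _ : ι => 𝕜) p →L[𝕜] lp (fun _ : κ => 𝕜) q}

/-- The columns of the infinite matrix representing `f`, i.e. the images under `f` of the standard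
basis vectors, have pairwise disjoint supports. -/
def HasDisjointColumns (f : lp (fun _ : ι => 𝕜) p →L[𝕜] lp (fun _ : κ => 𝕜) q) : Prop :=
  Pairwise (Disjoint on fun i => support (f (lp.single p i 1)))

namespace HasDisjointColumns

lemma apply_eq_mul (hf : HasDisjointColumns f) (hp : p ≠ ∞) {i : ι} {m : κ}
    (hm : f (lp.single p i 1) m ≠ 0) (v : lp (fun _ : ι => 𝕜) p) :
    f v m = v i * f (lp.single p i 1) m := by
  have hterm : ∀ j, f (lp.single p j (v j)) m = v j * f (lp.single p j 1) m := fun j => by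
    have hsingle : lp.single p j (v j) = v j • lp.single (E := fun _ : ι => 𝕜) p j 1 := by
      rw [← lp.single_smul, smul_eq_mul, mul_one]
    rw [hsingle, map_smul, lp.coeFn_smul, Pi.smul_apply, smul_eq_mul]
  have hsum : HasSum (fun j => v j * f (lp.single p j 1) m) (f v m) := by
    simp_rw [← hterm]
    exact ((lp.hasSum_single hp v).mapL f).mapL (lp.evalCLM 𝕜 (fun _ : κ => 𝕜) q m)
  refine hsum.unique (hasSum_single i fun j hj => ?_)
  have hmj : f (lp.single p j 1) m = 0 := notMem_support.mp ((hf hj).notMem_of_mem_right hm)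
  rw [hmj, mul_zero]

lemma exists_map_single_eq_single [DecidableEq κ] (hf : HasDisjointColumns f) (hp : p ≠ ∞)
    (hdense : DenseRange f) {i : ι} (hi : f (lp.single p i 1) ≠ 0) :
    ∃ (m : κ) (c : 𝕜), c ≠ 0 ∧ f (lp.single p i 1) = lp.single q m c := by
  set u := f (lp.single p i 1) with hu
  obtain ⟨m, hm⟩ : ∃ m, u m ≠ 0 := by
    by_contra! h
    exact hi (lp.ext (funext h))
  refine ⟨m, u m, hm, lp.ext (funext fun n => ?_)⟩
  by_cases hnm : n = m
  · rw [hnm, lp.single_apply_self]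
  rw [lp.single_apply_ne _ _ _ hnm]
  by_contra hn
  -- Proportionality of the coordinates `m` and `n` passes from the range of `f` to its closure.
  have hprop : (fun y : lp (fun _ : κ => 𝕜) q => y m * u n) = fun y => y n * u m := by
    refine hdense.equalizer ?_ ?_ (funext fun v => ?_)
    · exact (lp.evalCLM 𝕜 (fun _ : κ => 𝕜) q m).continuous.mul_const _
    · exact (lp.evalCLM 𝕜 (fun _ : κ => 𝕜) q n).continuous.mul_const _
    · simp only [comp_apply, hf.apply_eq_mul hp hm, hf.apply_eq_mul hp hn, ← hu]
      ring
  have hsingle := congrFun hprop (lp.single q m 1)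
  rw [lp.single_apply_self, lp.single_apply_ne _ _ _ hnm, one_mul, zero_mul] at hsingle
  exact hn hsingle

end HasDisjointColumns

end DisjointColumns

section Alternation

variable {V α K : Type*} {r : V → V → Prop} [Std.Symm r]

lemma alternates_of_reflTransGen {φ : V → α} (hφ : ∀ i k l, r i k → r i l → φ k = φ l) {u v : V}
    (huv : r u v) {j : V} (huj : Relation.ReflTransGen r u j) :
    (φ j = φ u ∧ ∀ k, r j k → φ k = φ v) ∨ (φ j = φ v ∧ ∀ k, r j k → φ k = φ u) := by
  induction huj with
  | refl => exact .inl ⟨rfl, fun k hk => hφ u k v hk huv⟩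
  | @tail x y _ hxy ih =>
    have hyx : r y x := symm hxy
    rcases ih with ⟨hx, hnbr⟩ | ⟨hx, hnbr⟩
    · exact .inr ⟨hnbr y hxy, fun k hk => (hφ y k x hk hyx).trans hx⟩
    · exact .inl ⟨hnbr y hxy, fun k hk => (hφ y k x hk hyx).trans hx⟩

lemma eq_of_common_neighbor [MonoidWithZero K] [IsRightCancelMulZero K] {c d : V → K}
    (hc : ∀ i, c i ≠ 0) (hcd : ∀ i k, r i k → c k = d i * c i ^ 2) {i k l : V}
    (hk : r i k) (hl : r i l) : d k = d l := by
  have hkl : c k = c l := (hcd i k hk).trans (hcd i l hl).symm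
  refine mul_right_cancel₀ (pow_ne_zero 2 (hc l)) ?_
  calc d k * c l ^ 2 = d k * c k ^ 2 := by rw [hkl]
    _ = c i := (hcd k i (symm hk)).symm
    _ = d l * c l ^ 2 := hcd l i (symm hl)

end Alternation

lemma memℓp_mul {ι 𝕜 : Type*} [RCLike 𝕜] {p q : ℝ≥0∞} (r : ℝ≥0∞) [p.HolderTriple q r]
    {v w : ι → 𝕜} (hv : Memℓp v p) (hw : Memℓp w q) : Memℓp (fun i => v i * w i) r :=
  hv.holder r hw (fun _ => ContinuousLinearMap.mul 𝕜 𝕜) fun _ =>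
    ContinuousLinearMap.opNorm_mul_le 𝕜 𝕜

section Graph

variable {a : ℕ → ℕ → ℝ}

lemma SimpleAdj.symm_adj (hadj : SimpleAdj a) : Std.Symm fun x y => a x y = 1 :=
  ⟨fun x y hxy => (hadj.2.1 y x).trans hxy⟩

lemma SimpleAdj.norm_rpow_two (hadj : SimpleAdj a) (k i : ℕ) :
    ‖a k i‖ ^ (2 : ℝ≥0∞).toReal = a k i := by
  rcases hadj.1 k i with h | h <;> simp [h]

lemma regular_or_biregular_of_deg_eq (hadj : SimpleAdj a) (hconn : Connected a)
    (hdeg : ∀ i k l, a i k = 1 → a i l = 1 → deg a k = deg a l) :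
    GraphRegular a ∨ GraphBiregular a := by
  have := hadj.symm_adj
  obtain ⟨n, h0n, -⟩ : ∃ n, a 0 n = 1 ∧ Relation.ReflTransGen (fun x y => a x y = 1) n 1 :=
    (hconn 0 1).cases_head.resolve_left zero_ne_one
  have halt := fun j => alternates_of_reflTransGen hdeg h0n (hconn 0 j)
  by_cases h : deg a 0 = deg a n
  · exact .inl ⟨deg a 0, fun i => (halt i).elim And.left fun hi => hi.1.trans h.symm⟩
  · refine .inr ⟨{i | deg a i = deg a 0}, deg a 0, deg a n, fun i hi => hi,
      fun i hi => ((halt i).resolve_left fun hi' => hi hi'.1).1, fun i k hki => ?_⟩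
    have hik : a i k = 1 := (hadj.2.1 i k).trans hki
    rcases halt i with ⟨hi, hnbr⟩ | ⟨hi, hnbr⟩
    · exact .inl ⟨hi, fun hk => h (hk.symm.trans (hnbr k hik))⟩
    · exact .inr ⟨fun hi' => h (hi'.symm.trans hi), hnbr k hik⟩

/-- The column `k ↦ a k i` of the adjacency matrix, which is the square `δ_i ⋆ δ_i`, as an element
of ℓ²(ℕ). -/
def column (hadj : SimpleAdj a) (hlf : GraphLocallyFinite a) (i : ℕ) : l2 :=
  ⟨fun k => a k i, memℓp_gen ((hlf i).congr fun k => (hadj.norm_rpow_two k i).symm)⟩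

lemma column_apply (hadj : SimpleAdj a) (hlf : GraphLocallyFinite a) (i k : ℕ) :
    column hadj hlf i k = a k i := rfl

lemma norm_column_sq (hadj : SimpleAdj a) (hlf : GraphLocallyFinite a) (i : ℕ) :
    ‖column hadj hlf i‖ ^ 2 = deg a i := by
  have h := lp.norm_rpow_eq_tsum (p := 2) (by simp) (column hadj hlf i)
  rw [ENNReal.toReal_ofNat, Real.rpow_two] at h
  exact h.trans (tsum_congr fun k => hadj.norm_rpow_two k i)

lemma exists_isStarProd (hadj : SimpleAdj a) (hlf : GraphLocallyFinite a)
    (hubd : UnifBoundedDegree a) (v w : l2) : ∃ q, IsStarProd a v w q := by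
  obtain ⟨M, -, hM⟩ := hubd
  have hcol : ∀ i, ‖column hadj hlf i‖ ≤ √M := fun i =>
    Real.le_sqrt_of_sq_le ((norm_column_sq hadj hlf i).trans_le (hM i))
  have hvw : Summable fun i => ‖v i * w i‖ :=
    (memℓp_mul 1 (lp.memℓp v) (lp.memℓp w)).summable_of_one.norm
  have hsum : Summable fun i => (v i * w i) • column hadj hlf i := by
    refine (hvw.mul_right √M).of_norm_bounded fun i => ?_
    rw [norm_smul]
    gcongr
    exact hcol i
  have happly : ∀ k, HasSum (fun i => v i * w i * a k i)
      ((∑' i, (v i * w i) • column hadj hlf i : l2) k) := fun k =>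
    hsum.hasSum.mapL (lp.evalCLM ℝ (fun _ : ℕ => ℝ) 2 k)
  exact ⟨_, fun k => (happly k).summable, fun k => (happly k).tsum_eq.symm⟩

lemma NonSingular.mul_eq_zero_of_isStarProd (hns : NonSingular a) {v w : l2}
    (h : IsStarProd a v w 0) (m : ℕ) : v m * w m = 0 := by
  have hmem : Memℓp (fun i => v i * w i) 2 :=
    (memℓp_mul 1 (lp.memℓp v) (lp.memℓp w)).of_exponent_ge one_le_two
  have hzero : (⟨_, hmem⟩ : l2) = 0 := hns _ fun k =>
    (tsum_congr fun i => mul_comm _ _).trans (h.2 k).symm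
  exact congrArg (fun u : l2 => u m) hzero

lemma isStarProd_single_single (hadj : SimpleAdj a) (hlf : GraphLocallyFinite a) (i : ℕ)
    (x y : ℝ) :
    IsStarProd a (lp.single 2 i x) (lp.single 2 i y) ((x * y) • column hadj hlf i) := by
  have h : ∀ k, HasSum (fun j => (lp.single 2 i x : l2) j * (lp.single 2 i y : l2) j * a k j)
      (x * y * a k i) := fun k => by
    convert hasSum_single i fun j hj => ?_ using 1
    · simp
    · simp [hj]
  exact ⟨fun k => (h k).summable, fun k => (h k).tsum_eq.symm⟩

lemma isRWProd_delta_self (hadj : SimpleAdj a) (hlf : GraphLocallyFinite a) (i : ℕ) :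
    IsRWProd a (delta i) (delta i) ((deg a i)⁻¹ • column hadj hlf i) := by
  have h : ∀ k, HasSum (fun j => (delta i : l2) j * (delta i : l2) j * (a k j / deg a j))
      ((deg a i)⁻¹ * a k i) := fun k => by
    convert hasSum_single i fun j hj => ?_ using 1
    · simp [delta, div_eq_inv_mul]
    · simp [delta, hj]
  exact ⟨fun k => (h k).summable, fun k => (h k).tsum_eq.symm⟩

lemma isRWProd_delta_of_ne (a : ℕ → ℕ → ℝ) {i j : ℕ} (hij : i ≠ j) :
    IsRWProd a (delta i) (delta j) 0 := by
  have h : ∀ m, (delta i : l2) m * (delta j : l2) m = 0 := fun m => by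
    by_cases hm : m = i
    · simp [delta, hm, hij]
    · simp [delta, hm]
  constructor <;> intro k <;> simp [h, summable_zero]

/-- `f` is a homomorphism of Hilbert evolution algebras from `A_RW(G)` to `A(G)`. The products
enter as relations, so the condition is imposed where both of them exist. -/
def IsRWStarHom (a : ℕ → ℕ → ℝ) (f : l2 →L[ℝ] l2) : Prop :=
  ∀ v w p q : l2, IsRWProd a v w p → IsStarProd a (f v) (f w) q → f p = q

namespace IsRWStarHom

variable {f : l2 →L[ℝ] l2}

lemma hasDisjointColumns (hf : IsRWStarHom a f) (hadj : SimpleAdj a) (hlf : GraphLocallyFinite a)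
    (hubd : UnifBoundedDegree a) (hns : NonSingular a) : HasDisjointColumns f := by
  intro i j hij
  obtain ⟨q, hq⟩ := exists_isStarProd hadj hlf hubd (f (delta i)) (f (delta j))
  obtain rfl : 0 = q := (map_zero f).symm.trans (hf _ _ _ _ (isRWProd_delta_of_ne a hij) hq)
  rw [onFun, Set.disjoint_left]
  intro m hi hj
  exact mul_ne_zero hi hj (hns.mul_eq_zero_of_isStarProd hq m)

lemma map_column (hf : IsRWStarHom a f) (hadj : SimpleAdj a) (hlf : GraphLocallyFinite a)
    {i : ℕ} {q : l2} (hq : IsStarProd a (f (delta i)) (f (delta i)) q) :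
    f (column hadj hlf i) = deg a i • q := by
  rw [← hf _ _ _ _ (isRWProd_delta_self hadj hlf i) hq, map_smul]
  by_cases hdeg : deg a i = 0
  · have hcol : column hadj hlf i = 0 := by
      rw [← norm_eq_zero, ← sq_eq_zero_iff, norm_column_sq, hdeg]
    simp [hcol]
  · rw [smul_inv_smul₀ hdeg]

lemma map_delta_eq_zero_of_adj (hf : IsRWStarHom a f) (hadj : SimpleAdj a)
    (hlf : GraphLocallyFinite a) (hdisj : HasDisjointColumns f) {i k : ℕ} (hki : a k i = 1)
    (hi : f (delta i) = 0) : f (delta k) = 0 := by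
  have hcol : f (column hadj hlf i) = 0 := by
    rw [hf.map_column hadj hlf (q := 0) (by simp [hi, IsStarProd, summable_zero]), smul_zero]
  ext m
  by_contra hm
  have happly := hdisj.apply_eq_mul ENNReal.ofNat_ne_top hm (column hadj hlf i)
  rw [hcol, column_apply, hki, one_mul] at happly
  exact hm happly.symm

lemma map_delta_ne_zero (hf : IsRWStarHom a f) (hadj : SimpleAdj a) (hconn : Connected a)
    (hlf : GraphLocallyFinite a) (hdisj : HasDisjointColumns f) (hdense : DenseRange f) (i : ℕ) :
    f (delta i) ≠ 0 := by
  intro hi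
  have hdelta : ∀ k, f (delta k) = 0 := fun k => by
    induction hconn i k with
    | refl => exact hi
    | tail _ hxy ih =>
      exact hf.map_delta_eq_zero_of_adj hadj hlf hdisj ((hadj.2.1 _ _).trans hxy) ih
  have hzero : f = 0 := lp.ext_continuousLinearMap ENNReal.ofNat_ne_top fun k =>
    ContinuousLinearMap.ext_ring (hdelta k)
  have hprop : (id : l2 → l2) = 0 := hdense.equalizer continuous_id continuous_zero (by
    ext; simp [hzero])
  simpa [delta] using congrArg (fun v : l2 => v i) (congrFun hprop (delta i))

lemma coeff_eq_of_adj (hf : IsRWStarHom a f) (hadj : SimpleAdj a) (hlf : GraphLocallyFinite a)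
    (hdisj : HasDisjointColumns f) {π : ℕ → ℕ} {c : ℕ → ℝ} (hc : ∀ i, c i ≠ 0)
    (hπ : ∀ i, f (delta i) = lp.single 2 (π i) (c i)) {i k : ℕ} (hki : a k i = 1) :
    c k = deg a i * c i ^ 2 := by
  have hcol : f (column hadj hlf i) = deg a i • (c i * c i) • column hadj hlf (π i) :=
    hf.map_column hadj hlf (by rw [hπ]; exact isStarProd_single_single hadj hlf _ _ _)
  have hk : f (delta k) (π k) = c k := by rw [hπ, lp.single_apply_self]
  have happly : f (column hadj hlf i) (π k) = c k := by
    rw [hdisj.apply_eq_mul ENNReal.ofNat_ne_top (i := k) (hk.trans_ne (hc k)), column_apply, hki,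
      one_mul]
    exact hk
  have hcoeff : c k = deg a i * (c i * c i * a (π k) (π i)) := by
    rw [← happly, hcol]
    rfl
  rcases hadj.1 (π k) (π i) with h | h
  · exact absurd (by simpa [h] using hcoeff) (hc k)
  · rw [hcoeff, h]
    ring

end IsRWStarHom

theorem regular_or_biregular_of_iso_general (a : ℕ → ℕ → ℝ) (hadj : SimpleAdj a)
    (hconn : Connected a) (hlf : GraphLocallyFinite a) (hubd : UnifBoundedDegree a)
    (hns : NonSingular a) (hhom : ∃ f : l2 →L[ℝ] l2, DenseRange f ∧ IsRWStarHom a f) :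
    GraphRegular a ∨ GraphBiregular a := by
  obtain ⟨f, hdense, hf⟩ := hhom
  have := hadj.symm_adj
  have hdisj : HasDisjointColumns f := hf.hasDisjointColumns hadj hlf hubd hns
  choose π c hc hπ using fun i => hdisj.exists_map_single_eq_single ENNReal.ofNat_ne_top hdense
    (hf.map_delta_ne_zero hadj hconn hlf hdisj hdense i)
  have hcoeff : ∀ i k, a i k = 1 → c k = deg a i * c i ^ 2 := fun i k hik =>
    hf.coeff_eq_of_adj hadj hlf hdisj hc hπ ((hadj.2.1 k i).trans hik)
  exact regular_or_biregular_of_deg_eq hadj hconn fun _ _ _ => eq_of_common_neighbor hc hcoeff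

end Graph

/-- for a connected non-singular graph with uniformly bounded degree, if there
exists an isomorphism of Hilbert evolution algebras from `A_RW(G)` to `A(G)` (a continuous
linear bijection `f` with continuous inverse satisfying `f(v ∘ w) = f(v) ⋆ f(w)` for all
`v, w`), then the graph is regular or biregular. -/
theorem regular_or_biregular_of_iso
    (a : ℕ → ℕ → ℝ)
    (hadj : SimpleAdj a) (hconn : Connected a)
    (hlf : GraphLocallyFinite a) (hubd : UnifBoundedDegree a)
    (hns : NonSingular a)
    (hiso : ∃ f : l2 ≃L[ℝ] l2,
      ∀ v w p q : l2, IsRWProd a v w p → IsStarProd a (f v) (f w) q → f p = q) :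
    GraphRegular a ∨ GraphBiregular a := by
  obtain ⟨f, hf⟩ := hiso
  exact regular_or_biregular_of_iso_general a hadj hconn hlf hubd hns
    ⟨f, f.surjective.denseRange, hf⟩
end
end

section
/- Let G be a d-regular graph on ℕ with d ≥ 1, i.e. deg(i) = d for all i. Then the linear map f : ℓ²(ℕ) → ℓ²(ℕ) defined by f(v) = d·v is an isomorphism of Hilbert evolution algebras from A(G) to A_RW(G): f is a continuous linear bijection with continuous inverse satisfying f(v ⋆ w) = f(v) ∘ f(w) for all v, w ∈ ℓ²(ℕ). -/
/-!
By Cauchy–Schwarz the sequence `(v_i w_i)` is in `ℓ¹`, and a matrix whose columns are bounded in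
`ℓ¹` maps `ℓ¹` to `ℓ¹ ⊆ ℓ²`, so `v ⋆ w` always exists. When every degree equals `d ≠ 0`, the product
`∘` is `⋆` divided by `d`, whence `(d v) ∘ (d w) = d² (v ⋆ w) / d = d (v ⋆ w)`; read backwards, the
same identity produces `v ∘ w` from `(v / d) ⋆ (w / d)`.
-/

noncomputable section
open scoped ENNReal

section ColumnBounded

variable {ι κ R : Type*} [NormedRing R] {u : ι → R} {a : κ → ι → R} {C : ℝ}

lemma summable_norm_mul_of_tsum_norm_le (hu : Summable fun i => ‖u i‖)
    (ha : ∀ i, Summable fun k => ‖a k i‖) (hC : ∀ i, ∑' k, ‖a k i‖ ≤ C) :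
    Summable fun x : κ × ι => ‖u x.2 * a x.1 x.2‖ := by
  have hcol (i : ι) : ∑' k, ‖u i‖ * ‖a k i‖ ≤ ‖u i‖ * C := by
    rw [tsum_mul_left]
    exact mul_le_mul_of_nonneg_left (hC i) (norm_nonneg _)
  have hcols : Summable fun i => ∑' k, ‖u i‖ * ‖a k i‖ :=
    (hu.mul_right C).of_nonneg_of_le (fun _ => tsum_nonneg fun _ => by positivity) hcol
  have hdouble : Summable fun x : ι × κ => ‖u x.1‖ * ‖a x.2 x.1‖ := by
    rw [summable_prod_of_nonneg fun _ => by positivity]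
    exact ⟨fun i => (ha i).mul_left ‖u i‖, hcols⟩
  exact hdouble.prod_symm.of_nonneg_of_le (fun _ => norm_nonneg _) fun _ => norm_mul_le _ _

lemma memℓp_one_tsum_mul_of_tsum_norm_le (hu : Summable fun i => ‖u i‖)
    (ha : ∀ i, Summable fun k => ‖a k i‖) (hC : ∀ i, ∑' k, ‖a k i‖ ≤ C) :
    Memℓp (fun k => ∑' i, u i * a k i) 1 := by
  have hdouble := summable_norm_mul_of_tsum_norm_le hu ha hC
  have hrow : Summable fun k => ‖∑' i, u i * a k i‖ :=
    hdouble.prod.of_nonneg_of_le (fun _ => norm_nonneg _)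
      fun k => norm_tsum_le_tsum_norm (hdouble.prod_factor k)
  exact memℓp_gen (by simpa using hrow)

end ColumnBounded

section Products

variable {a : ℕ → ℕ → ℝ} {C d : ℝ} {v w p q : l2}

lemma exists_isStarProd_s9 (ha : GraphLocallyFinite a) (hC : ∀ i, ∑' k, |a k i| ≤ C) (v w : l2) :
    ∃ p, IsStarProd a v w p := by
  have hvw : Summable fun i => v i * w i := by simpa using lp.summable_inner (𝕜 := ℝ) w v
  have hcol (i : ℕ) : Summable fun k => ‖a k i‖ := (ha i).norm
  have hmem := memℓp_one_tsum_mul_of_tsum_norm_le hvw.norm hcol hC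
  exact ⟨⟨_, hmem.of_exponent_ge one_le_two⟩,
    fun k => ((summable_norm_mul_of_tsum_norm_le hvw.norm hcol hC).prod_factor k).of_norm,
    fun _ => rfl⟩

lemma IsRWProd.unique (hp : IsRWProd a v w p) (hq : IsRWProd a v w q) : p = q :=
  lp.ext <| funext fun k => (hp.2 k).trans (hq.2 k).symm

lemma isRWProd_smul_iff_isStarProd (hd : d ≠ 0) (hreg : ∀ i, deg a i = d) :
    IsRWProd a (d • v) (d • w) (d • p) ↔ IsStarProd a v w p := by
  have hterm (k i : ℕ) :
      d * v i * (d * w i) * (a k i / deg a i) = d * (v i * w i * a k i) := by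
    rw [hreg]
    field_simp
  simp only [IsRWProd, IsStarProd, lp.coeFn_smul, Pi.smul_apply, smul_eq_mul, hterm,
    summable_mul_left_iff hd, tsum_mul_left, mul_right_inj' hd]

end Products

theorem regular_explicit_iso_general {a : ℕ → ℕ → ℝ} {C d : ℝ} (hd : d ≠ 0)
    (hsum : ∀ i, HasSum (fun k => a k i) d) (hC : ∀ i, ∑' k, |a k i| ≤ C) :
    ∃ f : l2 ≃L[ℝ] l2,
      (∀ v : l2, f v = d • v) ∧
      (∀ v w : l2, ∃ p : l2, IsStarProd a v w p) ∧
      (∀ v w : l2, ∃ q : l2, IsRWProd a v w q) ∧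
      (∀ v w p q : l2, IsStarProd a v w p → IsRWProd a (f v) (f w) q → f p = q) := by
  have hstar := exists_isStarProd_s9 (fun i => (hsum i).summable) hC
  have hiff {v w p : l2} : IsRWProd a (d • v) (d • w) (d • p) ↔ IsStarProd a v w p :=
    isRWProd_smul_iff_isStarProd hd fun i => (hsum i).tsum_eq
  refine ⟨ContinuousLinearEquiv.smulLeft (Units.mk0 d hd), fun _ => rfl, hstar, fun v w => ?_,
    fun v w p q hp hq => (hiff.2 hp).unique hq⟩
  obtain ⟨p, hp⟩ := hstar (d⁻¹ • v) (d⁻¹ • w)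
  exact ⟨d • p, by simpa only [smul_inv_smul₀ hd] using hiff.2 hp⟩

/-- for a `d`-regular graph on ℕ with `d ≥ 1`, the map `f(v) = d·v` is an
isomorphism of Hilbert evolution algebras from `A(G)` to `A_RW(G)`: a continuous linear
bijection with continuous inverse satisfying `f(v ⋆ w) = f(v) ∘ f(w)`. -/
theorem regular_explicit_iso
    (a : ℕ → ℕ → ℝ) (d : ℝ)
    (hadj : SimpleAdj a) (hlf : GraphLocallyFinite a)
    (hd : 1 ≤ d) (hreg : ∀ i, deg a i = d) :
    ∃ f : l2 ≃L[ℝ] l2,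
      (∀ v : l2, f v = d • v) ∧
      (∀ v w : l2, ∃ p : l2, IsStarProd a v w p) ∧
      (∀ v w : l2, ∃ q : l2, IsRWProd a v w q) ∧
      (∀ v w p q : l2, IsStarProd a v w p → IsRWProd a (f v) (f w) q → f p = q) := by
  have ha (k i : ℕ) : |a k i| = a k i := by rcases hadj.1 k i with h | h <;> simp [h]
  exact regular_explicit_iso_general (d := d) (by positivity) (fun i => hreg i ▸ (hlf i).hasSum)
    fun i => by simpa only [ha, deg] using (hreg i).le
end
end

section
/- Let G be a connected graph on ℕ with uniformly bounded degree which is non-singular (the bounded adjacency operator A on ℓ²(ℕ), (A v)_k = ∑_i a_{ki} v_i, has trivial kernel). Let f : ℓ²(ℕ) → ℓ²(ℕ) be an isomorphism of Hilbert evolution algebras from A_RW(G) to A(G), i.e. a continuous linear bijection with continuous inverse satisfying f(v ∘ w) = f(v) ⋆ f(w) for all v, w. Then there exist a bijection π : ℕ → ℕ and scalars α_i ≠ 0 such that f(δ_i) = α_i δ_{π(i)} for every i ∈ ℕ; moreover there exists M > 0 with |α_i| ≤ M for all i ∈ ℕ. -/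
/-!
If `v` and `w` have disjoint supports, then `v ∘ w = 0`, so `f v ⋆ f w = 0`. This product is the
adjacency operator applied to the pointwise product of `f v` and `f w`, so non-singularity makes
that pointwise product vanish: `f` preserves disjointness of supports.

A continuous linear bijection between sequence spaces which preserves disjointness is a weighted
permutation. Indeed `(f u)_m = ∑ i, u_i (f δ_i)_m`, and by disjointness at most one summand
survives, so `(f u)_m = u_i (f δ_i)_m` as soon as `(f δ_i)_m ≠ 0`. If `f δ_i` were nonzero at two
places `m ≠ k`, then `f u = δ_k` would force both `u_i = 0` and `u_i ≠ 0`.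
-/

noncomputable section
open scoped ENNReal

open scoped lp

section DisjointnessPreserving

variable {ι κ 𝕜 : Type*} [NontriviallyNormedField 𝕜] {p q : ℝ≥0∞}

/-- A map between sequence spaces preserves disjointness if it sends sequences with disjoint
supports to sequences with disjoint supports. Disjointness is encoded by the vanishing of the
pointwise product. -/
def PreservesDisjointness (f : ℓ^p(ι, 𝕜) → ℓ^q(κ, 𝕜)) : Prop :=
  ∀ v w, (∀ i, v i * w i = 0) → ∀ m, f v m * f w m = 0

variable [Fact (1 ≤ p)] [Fact (1 ≤ q)] {f : ℓ^p(ι, 𝕜) →L[𝕜] ℓ^q(κ, 𝕜)}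

lemma hasSum_lp_apply {β : Type*} {g : β → ℓ^p(ι, 𝕜)} {v : ℓ^p(ι, 𝕜)} (h : HasSum g v) (i : ι) :
    HasSum (fun j => g j i) (v i) :=
  h.mapL (lp.evalCLM 𝕜 (fun _ : ι => 𝕜) p i)

variable [DecidableEq ι]

lemma norm_apply_single_one_le (f : ℓ^p(ι, 𝕜) →L[𝕜] ℓ^q(κ, 𝕜)) (i : ι) (m : κ) :
    ‖f (lp.single p i 1) m‖ ≤ ‖f‖ := by
  have hp : 0 < p := zero_lt_one.trans_le Fact.out
  have hq : q ≠ 0 := (zero_lt_one.trans_le Fact.out).ne'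
  calc ‖f (lp.single p i 1) m‖ ≤ ‖f (lp.single p i 1)‖ := lp.norm_apply_le_norm hq _ m
    _ ≤ ‖f‖ * ‖(lp.single p i 1 : ℓ^p(ι, 𝕜))‖ := f.le_opNorm _
    _ = ‖f‖ := by rw [lp.norm_single hp, norm_one, mul_one]

lemma exists_apply_single_ne_zero_of_injective (hf : Function.Injective f) (i : ι) :
    ∃ m, f (lp.single p i 1) m ≠ 0 := by
  by_contra! h
  have hsingle : (lp.single p i 1 : ℓ^p(ι, 𝕜)) = 0 :=
    (map_eq_zero_iff f hf).mp (lp.ext (funext h))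
  have hone := lp.single_apply_self (E := fun _ : ι => 𝕜) p i 1
  rw [hsingle] at hone
  exact zero_ne_one hone

lemma hasSum_mul_apply_single (hp : p ≠ ∞) (f : ℓ^p(ι, 𝕜) →L[𝕜] ℓ^q(κ, 𝕜)) (u : ℓ^p(ι, 𝕜))
    (m : κ) :
    HasSum (fun i => u i * f (lp.single p i 1) m) (f u m) := by
  have hsingle (i : ι) : lp.single p i (u i) = u i • (lp.single p i 1 : ℓ^p(ι, 𝕜)) := by
    rw [← lp.single_smul, smul_eq_mul, mul_one]
  simpa only [hsingle, map_smul, lp.coeFn_smul, Pi.smul_apply, smul_eq_mul] using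
    hasSum_lp_apply ((lp.hasSum_single hp u).mapL f) m

lemma exists_apply_single_ne_zero_of_surjective (hp : p ≠ ∞) (hf : Function.Surjective f) (m : κ) :
    ∃ i, f (lp.single p i 1) m ≠ 0 := by
  classical
  by_contra! h
  obtain ⟨u, hu⟩ := hf (lp.single q m 1)
  have hsum := hasSum_mul_apply_single hp f u m
  simp only [h, mul_zero, hu, lp.single_apply_self] at hsum
  exact zero_ne_one (hasSum_zero.unique hsum)

namespace PreservesDisjointness

lemma eq_of_apply_single_ne_zero (hdisj : PreservesDisjointness f) {i j : ι} {m : κ}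
    (hi : f (lp.single p i 1) m ≠ 0) (hj : f (lp.single p j 1) m ≠ 0) : i = j := by
  by_contra hij
  refine mul_ne_zero hi hj (hdisj _ _ (fun k => ?_) m)
  obtain rfl | hki := eq_or_ne k i
  · rw [lp.single_apply_ne _ _ _ hij, mul_zero]
  · rw [lp.single_apply_ne _ _ _ hki, zero_mul]

lemma apply_eq_mul (hdisj : PreservesDisjointness f) (hp : p ≠ ∞) {i : ι} {m : κ}
    (hi : f (lp.single p i 1) m ≠ 0) (u : ℓ^p(ι, 𝕜)) :
    f u m = u i * f (lp.single p i 1) m := by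
  refine (hasSum_mul_apply_single hp f u m).unique (hasSum_single i fun j hj => ?_)
  rw [not_ne_iff.mp fun hjm => hj (hdisj.eq_of_apply_single_ne_zero hjm hi), mul_zero]

lemma eq_of_apply_single_ne_zero_of_surjective (hdisj : PreservesDisjointness f) (hp : p ≠ ∞)
    (hf : Function.Surjective f) {i : ι} {m k : κ} (hm : f (lp.single p i 1) m ≠ 0)
    (hk : f (lp.single p i 1) k ≠ 0) : m = k := by
  classical
  by_contra hmk
  obtain ⟨u, hu⟩ := hf (lp.single q k 1)
  have hum : u i * f (lp.single p i 1) m = 0 := by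
    rw [← hdisj.apply_eq_mul hp hm, hu, lp.single_apply_ne _ _ _ hmk]
  have huk : u i * f (lp.single p i 1) k = 1 := by
    rw [← hdisj.apply_eq_mul hp hk, hu, lp.single_apply_self]
  rw [(mul_eq_zero.mp hum).resolve_right hm, zero_mul] at huk
  exact zero_ne_one huk

lemma exists_equiv_apply_single_ne_zero_iff (hdisj : PreservesDisjointness f) (hp : p ≠ ∞)
    (hf : Function.Bijective f) :
    ∃ π : ι ≃ κ, ∀ i m, f (lp.single p i 1) m ≠ 0 ↔ m = π i := by
  choose π hπ using exists_apply_single_ne_zero_of_injective hf.injective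
  have hπ_unique {i : ι} {m : κ} (hm : f (lp.single p i 1) m ≠ 0) : m = π i :=
    hdisj.eq_of_apply_single_ne_zero_of_surjective hp hf.surjective hm (hπ i)
  have hπ_inj : Function.Injective π := fun i j hij =>
    hdisj.eq_of_apply_single_ne_zero (hπ i) (hij ▸ hπ j)
  have hπ_surj : Function.Surjective π := fun m =>
    (exists_apply_single_ne_zero_of_surjective hp hf.surjective m).imp fun _ hi =>
      (hπ_unique hi).symm
  exact ⟨.ofBijective π ⟨hπ_inj, hπ_surj⟩, fun i m => ⟨hπ_unique, fun hm => hm ▸ hπ i⟩⟩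

theorem exists_equiv_apply_single_eq_smul [DecidableEq κ] (hdisj : PreservesDisjointness f)
    (hp : p ≠ ∞) (hf : Function.Bijective f) :
    ∃ (π : ι ≃ κ) (α : ι → 𝕜), (∀ i, α i ≠ 0) ∧
      (∀ i, f (lp.single p i 1) = α i • lp.single q (π i) 1) ∧ ∀ i, ‖α i‖ ≤ ‖f‖ := by
  obtain ⟨π, hπ⟩ := hdisj.exists_equiv_apply_single_ne_zero_iff hp hf
  refine ⟨π, fun i => f (lp.single p i 1) (π i), fun i => (hπ i _).mpr rfl, fun i => ?_,
    fun i => norm_apply_single_one_le f i _⟩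
  ext m
  rw [← lp.single_smul, smul_eq_mul, mul_one]
  obtain rfl | hm := eq_or_ne m (π i)
  · rw [lp.single_apply_self]
  · rw [lp.single_apply_ne _ _ _ hm, not_ne_iff.mp (mt (hπ i m).mp hm)]

end PreservesDisjointness

end DisjointnessPreserving

section EvolutionAlgebra

variable {ι κ 𝕜 : Type*} [NontriviallyNormedField 𝕜]

/-- `p` is the product of `v` and `w` in the Hilbert evolution algebra on `ℓ²(ι)` with structure
coefficients `c`, that is, with `δ_i · δ_i = ∑ k, c k i δ_k` and `δ_i · δ_j = 0` for `i ≠ j`.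
A relation rather than an operation, since for general `c` the product need not exist. -/
def IsEvolutionProd (c : ι → ι → 𝕜) (v w p : ℓ²(ι, 𝕜)) : Prop :=
  ∀ k, HasSum (fun i => v i * w i * c k i) (p k)

/-- A map is multiplicative for the evolution algebras with structure coefficients `b` and `c` if
it carries products to products, wherever both products exist. -/
def PreservesEvolutionProd (b : ι → ι → 𝕜) (c : κ → κ → 𝕜) (f : ℓ²(ι, 𝕜) → ℓ²(κ, 𝕜)) : Prop :=
  ∀ v w p q, IsEvolutionProd b v w p → IsEvolutionProd c (f v) (f w) q → f p = q

/-- The columns of the matrix `c` are uniformly bounded in `ℓ²`. Bounding finite partial sums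
avoids `∑'`, which is zero for a column outside `ℓ²`. -/
def HasBoundedColumns (c : ι → κ → 𝕜) : Prop :=
  ∃ C : ℝ, ∀ i, ∀ s : Finset ι, ∑ k ∈ s, ‖c k i‖ ^ 2 ≤ C

/-- The operator on `ℓ²` given by the matrix `c` has trivial kernel. A vector counts as being in
the kernel only if all the series defining its image converge. -/
def HasTrivialKernel (c : ι → κ → 𝕜) : Prop :=
  ∀ v : ℓ²(κ, 𝕜), (∀ k, HasSum (fun i => c k i * v i) 0) → v = 0

lemma isEvolutionProd_zero_of_mul_eq_zero {v w : ℓ²(ι, 𝕜)} (h : ∀ i, v i * w i = 0)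
    (c : ι → ι → 𝕜) : IsEvolutionProd c v w 0 := fun k => by
  simpa only [h, zero_mul] using! hasSum_zero

lemma memℓp_one_mul (v w : ℓ²(ι, 𝕜)) : Memℓp (fun i => v i * w i) 1 := by
  refine memℓp_gen ?_
  simpa only [norm_mul, ENNReal.toReal_one, Real.rpow_one] using
    lp.summable_mul (p := 2) (q := 2) (by simpa using Real.HolderConjugate.two_two) v w

lemma HasTrivialKernel.mul_eq_zero {c : ι → ι → 𝕜} (hc : HasTrivialKernel c) {v w : ℓ²(ι, 𝕜)}
    (h : IsEvolutionProd c v w 0) (i : ι) : v i * w i = 0 := by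
  let u : ℓ²(ι, 𝕜) := ⟨fun i => v i * w i, (memℓp_one_mul v w).of_exponent_ge one_le_two⟩
  have hu : u = 0 := hc u fun k => by simpa only [mul_comm (c k _)] using! h k
  exact congr_fun (congr_arg (⇑) hu) i

lemma HasBoundedColumns.exists_columns {c : ι → κ → 𝕜} (hc : HasBoundedColumns c) :
    ∃ (col : κ → ℓ²(ι, 𝕜)) (C : ℝ), (∀ i k, col i k = c k i) ∧ ∀ i, ‖col i‖ ≤ C := by
  obtain ⟨C, hC⟩ := hc
  have hmem (i : κ) : Memℓp (fun k => c k i) 2 := memℓp_gen' (C := C) (by simpa using hC i)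
  refine ⟨fun i => ⟨fun k => c k i, hmem i⟩, √C, fun _ _ => rfl, fun i => ?_⟩
  have hC_nonneg : 0 ≤ C := by simpa using hC i ∅
  refine lp.norm_le_of_forall_sum_le (by norm_num) C.sqrt_nonneg fun s => ?_
  simpa [Real.sq_sqrt hC_nonneg] using hC i s

lemma HasBoundedColumns.exists_isEvolutionProd [CompleteSpace 𝕜] {c : ι → ι → 𝕜}
    (hc : HasBoundedColumns c) (v w : ℓ²(ι, 𝕜)) : ∃ p, IsEvolutionProd c v w p := by
  obtain ⟨col, C, hcol, hC⟩ := hc.exists_columns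
  -- The product is the series `∑ i, (v i * w i) • col i`, which converges absolutely in `ℓ²`.
  have hnorm : Summable fun i => ‖v i * w i‖ := by
    simpa using (memℓp_one_mul v w).summable (by norm_num)
  have hsum : Summable fun i => (v i * w i) • col i := by
    refine .of_norm_bounded (hnorm.mul_right C) fun i => ?_
    rw [norm_smul]
    gcongr
    exact hC i
  refine ⟨∑' i, (v i * w i) • col i, fun k => ?_⟩
  simpa only [lp.coeFn_smul, Pi.smul_apply, hcol, smul_eq_mul] using hasSum_lp_apply hsum.hasSum k

lemma PreservesEvolutionProd.preservesDisjointness [CompleteSpace 𝕜] {b : ι → ι → 𝕜}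
    {c : κ → κ → 𝕜} {f : ℓ²(ι, 𝕜) →L[𝕜] ℓ²(κ, 𝕜)} (hf : PreservesEvolutionProd b c f)
    (hc : HasBoundedColumns c) (hker : HasTrivialKernel c) : PreservesDisjointness f := by
  intro v w hvw
  obtain ⟨q, hq⟩ := hc.exists_isEvolutionProd (f v) (f w)
  have hq_zero : q = 0 := by
    rw [← hf v w 0 q (isEvolutionProd_zero_of_mul_eq_zero hvw b) hq, map_zero]
  exact hker.mul_eq_zero (hq_zero ▸ hq)

theorem iso_is_weighted_permutation_general [CompleteSpace 𝕜] [DecidableEq ι] [DecidableEq κ]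
    {b : ι → ι → 𝕜} {c : κ → κ → 𝕜} (hc : HasBoundedColumns c) (hker : HasTrivialKernel c)
    {f : ℓ²(ι, 𝕜) →L[𝕜] ℓ²(κ, 𝕜)} (hf : Function.Bijective f)
    (hmul : PreservesEvolutionProd b c f) :
    ∃ (π : ι ≃ κ) (α : ι → 𝕜),
      (∀ i, α i ≠ 0) ∧
      (∀ i, f (lp.single 2 i 1) = α i • lp.single 2 (π i) 1) ∧
      ∃ M > 0, ∀ i, ‖α i‖ ≤ M := by
  obtain ⟨π, α, hα, hfα, hbound⟩ :=
    (hmul.preservesDisjointness hc hker).exists_equiv_apply_single_eq_smul ENNReal.ofNat_ne_top hf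
  exact ⟨π, α, hα, hfα, ‖f‖ + 1, by positivity, fun i => (hbound i).trans (lt_add_one _).le⟩

end EvolutionAlgebra

section Graph

variable {a : ℕ → ℕ → ℝ} {v w p : l2}

lemma isStarProd_iff_isEvolutionProd : IsStarProd a v w p ↔ IsEvolutionProd a v w p :=
  ⟨fun h k => h.2 k ▸ (h.1 k).hasSum,
    fun h => ⟨fun k => (h k).summable, fun k => (h k).tsum_eq.symm⟩⟩

lemma isRWProd_iff_isEvolutionProd :
    IsRWProd a v w p ↔ IsEvolutionProd (fun k i => a k i / deg a i) v w p :=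
  isStarProd_iff_isEvolutionProd

lemma NonSingular.hasTrivialKernel (h : NonSingular a) : HasTrivialKernel a :=
  fun v hv => h v fun k => (hv k).tsum_eq

lemma SimpleAdj.hasBoundedColumns (hadj : SimpleAdj a) (hlf : GraphLocallyFinite a)
    (hubd : UnifBoundedDegree a) : HasBoundedColumns a := by
  obtain ⟨M, -, hM⟩ := hubd
  have hsq (k i : ℕ) : ‖a k i‖ ^ 2 = a k i := by
    obtain h | h := hadj.1 k i <;> simp [h]
  have hnonneg (k i : ℕ) : 0 ≤ a k i := hsq k i ▸ sq_nonneg _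
  refine ⟨M, fun i s => ?_⟩
  calc ∑ k ∈ s, ‖a k i‖ ^ 2 = ∑ k ∈ s, a k i := Finset.sum_congr rfl fun k _ => hsq k i
    _ ≤ deg a i := (hlf i).sum_le_tsum s fun k _ => hnonneg k i
    _ ≤ M := hM i

end Graph

/-- for a connected non-singular graph with uniformly bounded degree, every
isomorphism `f` of Hilbert evolution algebras from `A_RW(G)` to `A(G)` acts on the
standard basis by `f(δ_i) = α_i δ_{π(i)}` for some bijection `π` of ℕ and nonzero scalars
`α_i`, which are moreover uniformly bounded. -/
theorem iso_is_weighted_permutation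
    (a : ℕ → ℕ → ℝ)
    (hadj : SimpleAdj a) (hconn : Connected a)
    (hlf : GraphLocallyFinite a) (hubd : UnifBoundedDegree a)
    (hns : NonSingular a)
    (f : l2 ≃L[ℝ] l2)
    (hf : ∀ v w p q : l2, IsRWProd a v w p → IsStarProd a (f v) (f w) q → f p = q) :
    ∃ (π : Equiv.Perm ℕ) (α : ℕ → ℝ),
      (∀ i, α i ≠ 0) ∧
      (∀ i, f (delta i) = α i • delta (π i)) ∧
      ∃ M > 0, ∀ i, |α i| ≤ M := by
  have hmul : PreservesEvolutionProd (fun k i => a k i / deg a i) a f := fun v w p q hp hq =>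
    hf v w p q (isRWProd_iff_isEvolutionProd.mpr hp) (isStarProd_iff_isEvolutionProd.mpr hq)
  exact iso_is_weighted_permutation_general (f := (f : l2 →L[ℝ] l2))
    (hadj.hasBoundedColumns hlf hubd) hns.hasTrivialKernel f.bijective hmul
end
end
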